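/- Localized first variation identity for the diffuse surface measure: for every test function φ ∈ C¹_c(ℝ^d × (0,T)) and every t ∈ (0,T), σ d/dt ∫_{ℝ^d} φ(x,t) dμ_t^ε(x) = ∫_{ℝ^d} ( −ε φ (∂ₜφ̃)² + λ(t) φ √(2W(φ̃)) ∂ₜφ̃ − ε (∇φ · ∇φ̃) ∂ₜφ̃ ) dx + σ ∫_{ℝ^d} ∂ₜφ dμ_t^ε, where φ̃ denotes the solution of the equation and φ the test function. -/

import Mathlib

open MeasureTheory Real Function
open scoped RealInnerProductSpace

noncomputable section

abbrev Euc (d : ℕ) := EuclideanSpace ℝ (Fin d)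

/-- The double-well potential `W(s) = (1-s²)²/2`. -/
def W (s : ℝ) : ℝ := (1 - s ^ 2) ^ 2 / 2

/-- Its derivative `W'(s) = -2s(1-s²)`. -/
def Wp (s : ℝ) : ℝ := -2 * s * (1 - s ^ 2)

/-- `k(s) = ∫₀ˢ √(2W(r)) dr`. -/
def kfun (s : ℝ) : ℝ := ∫ r in (0:ℝ)..s, Real.sqrt (2 * W r)

/-- The unit cell `Q = [0,1)^d`. -/
def Qcell (d : ℕ) : Set (Euc d) := {x | ∀ i, x i ∈ Set.Ico (0:ℝ) 1}

/-- The Laplacian (sum of second partial derivatives). -/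
def lap {d : ℕ} (f : Euc d → ℝ) (x : Euc d) : ℝ :=
  ∑ i : Fin d, fderiv ℝ (fun y => fderiv ℝ f y (EuclideanSpace.single i 1)) x
    (EuclideanSpace.single i 1)

/-- `σ = ∫₋₁¹ √(2W(s)) ds`. -/
def sigma0 : ℝ := ∫ s in (-1:ℝ)..1, Real.sqrt (2 * W s)

/-- Density of the diffuse surface measure `μ_t^ε` with respect to Lebesgue measure. -/
def muDens (d : ℕ) (ε : ℝ) (φt : Euc d → ℝ → ℝ) (x : Euc d) (t : ℝ) : ℝ :=
  (1 / sigma0) * (ε * ‖gradient (fun y => φt y t) x‖ ^ 2 / 2 + W (φt x t) / ε)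

/-- spatial partial derivative -/
def pX {d : ℕ} (i : Fin d) (F : Euc d × ℝ → ℝ) (p : Euc d × ℝ) : ℝ :=
  fderiv ℝ F p (EuclideanSpace.single i 1, 0)

/-- time derivative -/
def pT {d : ℕ} (F : Euc d × ℝ → ℝ) (p : Euc d × ℝ) : ℝ := fderiv ℝ F p (0, 1)

theorem slice_x {d : ℕ} {F : Euc d × ℝ → ℝ} (hF : Differentiable ℝ F) (x : Euc d) (t : ℝ) :
    HasFDerivAt (fun y => F (y, t))
      ((fderiv ℝ F (x, t)).comp (ContinuousLinearMap.inl ℝ (Euc d) ℝ)) x :=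
  (hF (x, t)).hasFDerivAt.comp x (hasFDerivAt_prodMk_left x t)

theorem slice_x_apply {d : ℕ} {F : Euc d × ℝ → ℝ} (hF : Differentiable ℝ F) (x : Euc d) (t : ℝ)
    (i : Fin d) :
    fderiv ℝ (fun y => F (y, t)) x (EuclideanSpace.single i 1) = pX i F (x, t) := by
  rw [(slice_x hF x t).fderiv]
  simp [pX]

theorem slice_t {d : ℕ} {F : Euc d × ℝ → ℝ} (hF : Differentiable ℝ F) (x : Euc d) (t : ℝ) :
    HasDerivAt (fun s => F (x, s)) (pT F (x, t)) t := by
  have h := ((hF (x, t)).hasFDerivAt.comp t (hasFDerivAt_prodMk_right x t)).hasDerivAt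
  refine HasDerivAt.congr_deriv (f := fun s => F (x, s)) h ?_
  simp [pT]

theorem pX_contDiff {d : ℕ} {F : Euc d × ℝ → ℝ} (hF : ContDiff ℝ (⊤ : ℕ∞) F) (i : Fin d) :
    ContDiff ℝ (⊤ : ℕ∞) (pX i F) :=
  (hF.fderiv_right (m := (⊤ : ℕ∞)) (by simp)).clm_apply contDiff_const

theorem pT_contDiff {d : ℕ} {F : Euc d × ℝ → ℝ} (hF : ContDiff ℝ (⊤ : ℕ∞) F) :
    ContDiff ℝ (⊤ : ℕ∞) (pT F) :=
  (hF.fderiv_right (m := (⊤ : ℕ∞)) (by simp)).clm_apply contDiff_const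

theorem pX_cont {d : ℕ} {F : Euc d × ℝ → ℝ} (hF : ContDiff ℝ 1 F) (i : Fin d) :
    Continuous (pX i F) :=
  (hF.continuous_fderiv (by simp)).clm_apply continuous_const

theorem pT_cont {d : ℕ} {F : Euc d × ℝ → ℝ} (hF : ContDiff ℝ 1 F) :
    Continuous (pT F) :=
  (hF.continuous_fderiv (by simp)).clm_apply continuous_const

theorem mixed {d : ℕ} {F : Euc d × ℝ → ℝ} (hF : ContDiff ℝ (⊤ : ℕ∞) F) (i : Fin d)
    (p : Euc d × ℝ) : pT (pX i F) p = pX i (pT F) p := by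
  have hd : DifferentiableAt ℝ (fderiv ℝ F) p :=
    ((hF.fderiv_right (m := (⊤ : ℕ∞)) (by simp)).differentiable (by simp)) p
  have hs : IsSymmSndFDerivAt ℝ F p :=
    hF.contDiffAt.isSymmSndFDerivAt (by
      rw [minSmoothness_of_isRCLikeNormedField]; exact WithTop.coe_le_coe.2 (le_top : (2 : ℕ∞) ≤ ⊤))
  have h1 : ∀ v w : Euc d × ℝ,
      fderiv ℝ (fun q => fderiv ℝ F q v) p w = fderiv ℝ (fderiv ℝ F) p w v := by
    intro v w
    rw [fderiv_clm_apply hd (differentiableAt_const v)]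
    simp
  change fderiv ℝ (fun q => fderiv ℝ F q _) p _ = fderiv ℝ (fun q => fderiv ℝ F q _) p _
  rw [h1, h1]
  exact hs.eq _ _

theorem slice_supp {d : ℕ} {F : Euc d × ℝ → ℝ} (hc : HasCompactSupport F) (t : ℝ) :
    HasCompactSupport (fun x => F (x, t)) := by
  refine HasCompactSupport.intro (K := Prod.fst '' tsupport F)
    (hc.isCompact.image continuous_fst) ?_
  intro x hx
  by_contra h
  exact hx ⟨(x, t), subset_tsupport _ h, rfl⟩

theorem slice_int {d : ℕ} {F : Euc d × ℝ → ℝ} (hF : Continuous F)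
    (hc : HasCompactSupport F) (t : ℝ) :
    Integrable (fun x => F (x, t)) :=
  (hF.comp (by fun_prop : Continuous fun x : Euc d => (x, t))).integrable_of_hasCompactSupport
    (slice_supp hc t)

theorem deriv_integral {d : ℕ} {F : Euc d × ℝ → ℝ} (hF : ContDiff ℝ 1 F)
    (hc : HasCompactSupport F) (t : ℝ) :
    HasDerivAt (fun s => ∫ x, F (x, s)) (∫ x, pT F (x, t)) t := by
  have hcT : HasCompactSupport (pT F) := hc.fderiv_apply (𝕜 := ℝ) _
  have hTc : Continuous (pT F) := pT_cont hF
  obtain ⟨C, hC⟩ := hTc.bounded_above_of_compact_support hcT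
  have hK : IsCompact (Prod.fst '' tsupport (pT F)) := hcT.isCompact.image continuous_fst
  refine (hasDerivAt_integral_of_dominated_loc_of_deriv_le (s := Set.univ)
    (F := fun s x => F (x, s)) (F' := fun s x => pT F (x, s))
    (bound := Set.indicator (Prod.fst '' tsupport (pT F)) (fun _ => C))
    Filter.univ_mem ?_ (slice_int hF.continuous hc t)
    (slice_int hTc hcT t).aestronglyMeasurable ?_ ?_ ?_).2
  · exact Filter.Eventually.of_forall fun s => (slice_int hF.continuous hc s).aestronglyMeasurable
  · refine Filter.Eventually.of_forall fun x s _ => ?_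
    by_cases hx : x ∈ Prod.fst '' tsupport (pT F)
    · rw [Set.indicator_of_mem hx]; exact hC _
    · rw [Set.indicator_of_notMem hx]
      have : pT F (x, s) = 0 := by
        by_contra h
        exact hx ⟨(x, s), subset_tsupport _ h, rfl⟩
      simp [this]
  · rw [integrable_indicator_iff hK.measurableSet]
    exact integrableOn_const hK.measure_lt_top.ne
  · exact Filter.Eventually.of_forall fun x s _ => slice_t (hF.differentiable (by simp)) x s

theorem grad_coord {d : ℕ} (f : Euc d → ℝ) (x : Euc d) (i : Fin d) :
    (gradient f x) i = fderiv ℝ f x (EuclideanSpace.single i 1) := by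
  have h : ⟪gradient f x, EuclideanSpace.single i (1:ℝ)⟫ =
      fderiv ℝ f x (EuclideanSpace.single i 1) := by
    rw [gradient, InnerProductSpace.toDual_symm_apply]
  rw [← h, EuclideanSpace.inner_single_right]
  simp

theorem sigma0_ne : sigma0 ≠ 0 := by
  have h : sigma0 = ∫ s in (-1:ℝ)..1, (1 - s ^ 2) := by
    unfold sigma0
    apply intervalIntegral.integral_congr
    intro s hs
    rw [Set.uIcc_of_le (by norm_num)] at hs
    have h0 : 0 ≤ 1 - s ^ 2 := by nlinarith [hs.1, hs.2]
    have : 2 * W s = (1 - s ^ 2) ^ 2 := by unfold W; ring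
    simp only [this]
    exact Real.sqrt_sq h0
  rw [h, intervalIntegral.integral_sub (by simp) (by simp)]
  simp
  norm_num

theorem W_hasDerivAt (s : ℝ) : HasDerivAt W (Wp s) s := by
  have h := (((hasDerivAt_id s).pow 2).const_sub 1).pow 2 |>.div_const 2
  refine h.congr_deriv ?_
  simp [Wp]
  ring

theorem W_contDiff : ContDiff ℝ (⊤ : ℕ∞) W := by
  unfold W; fun_prop

theorem Wp_cont : Continuous Wp := by
  unfold Wp; fun_prop

theorem by_parts {d : ℕ} {Z G H : Euc d × ℝ → ℝ} (hZ : ContDiff ℝ 1 Z)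
    (hc : HasCompactSupport Z) (hG : ContDiff ℝ 1 G) (hH : ContDiff ℝ 1 H)
    (t : ℝ) (i : Fin d) :
    ∫ x, Z (x, t) * G (x, t) * pX i H (x, t) =
      - ∫ x, (pX i Z (x, t) * G (x, t) + Z (x, t) * pX i G (x, t)) * H (x, t) := by
  have hcX : HasCompactSupport (pX i Z) := hc.fderiv_apply (𝕜 := ℝ) _
  have hZd := hZ.differentiable (by simp)
  have hGd := hG.differentiable (by simp)
  have hHd := hH.differentiable (by simp)
  have e1 : ∀ x, fderiv ℝ (fun y => Z (y, t) * G (y, t)) x (EuclideanSpace.single i 1)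
      = pX i Z (x, t) * G (x, t) + Z (x, t) * pX i G (x, t) := by
    intro x
    rw [((slice_x hZd x t).fun_mul (slice_x hGd x t)).fderiv]
    simp [pX]; ring
  have e2 := fun x => slice_x_apply hHd x t i
  have c1 := pX_cont hZ i
  have c2 := pX_cont hG i
  have c3 := pX_cont hH i
  have c4 := hZ.continuous
  have c5 := hG.continuous
  have c6 := hH.continuous
  have h := integral_mul_fderiv_eq_neg_fderiv_mul_of_integrable (𝕜 := ℝ)
    (μ := (volume : Measure (Euc d)))
    (f := fun y => Z (y, t) * G (y, t)) (g := fun y => H (y, t))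
    (v := EuclideanSpace.single i 1) ?_ ?_ ?_ ?_ ?_
  · simp only [e1, e2] at h
    exact h
  · simp only [e1]
    exact slice_int (F := fun p => (pX i Z p * G p + Z p * pX i G p) * H p) (by fun_prop)
      ((HasCompactSupport.add hcX.mul_right hc.mul_right).mul_right) t
  · simp only [e2]
    exact slice_int (F := fun p => Z p * G p * pX i H p) (by fun_prop)
      (hc.mul_right.mul_right) t
  · exact slice_int (F := fun p => Z p * G p * H p) (by fun_prop)
      (hc.mul_right.mul_right) t
  · exact fun x _ => ((slice_x hZd x t).mul (slice_x hGd x t)).differentiableAt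
  · exact fun x _ => (slice_x hHd x t).differentiableAt

/-- localized first variation identity for the diffuse surface
measure: for every `C¹` test function `ζ` compactly supported in `ℝ^d × (0,T)` and
every `t ∈ (0,T)`,
`σ (d/dt) ∫ ζ dμ_t^ε = ∫ (-ε ζ (∂ₜφ̃)² + λ ζ √(2W(φ̃)) ∂ₜφ̃ - ε ∇ζ·∇φ̃ ∂ₜφ̃) dx + σ ∫ ∂ₜζ dμ_t^ε`. -/
theorem stmt2 (d : ℕ) (hd : 2 ≤ d) (T ε α : ℝ) (hT : 0 < T) (hε : 0 < ε)
    (hα : α ∈ Set.Ioo (0:ℝ) 1)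
    (φt : Euc d → ℝ → ℝ)
    (hφt : ContDiff ℝ (⊤ : ℕ∞) (Function.uncurry φt))
    (hper : ∀ (x : Euc d) (z : Fin d → ℤ) (t : ℝ),
      φt (x + (WithLp.equiv 2 (Fin d → ℝ)).symm fun i => (z i : ℝ)) t = φt x t)
    (lam : ℝ → ℝ)
    (hlam : ∀ t, lam t = ε ^ (-α) *
      ((∫ x in Qcell d, kfun (φt x 0)) - (∫ x in Qcell d, kfun (φt x t))))
    (hPDE : ∀ (x : Euc d), ∀ t ∈ Set.Ioo (0:ℝ) T,
      ε * deriv (φt x) t =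
        ε * lap (fun y => φt y t) x - Wp (φt x t) / ε + lam t * Real.sqrt (2 * W (φt x t)))
    (ζ : Euc d → ℝ → ℝ)
    (hζ : ContDiff ℝ 1 (Function.uncurry ζ))
    (hζc : HasCompactSupport (Function.uncurry ζ))
    (hζsupp : tsupport (Function.uncurry ζ) ⊆ Set.univ ×ˢ Set.Ioo (0:ℝ) T) :
    ∀ t ∈ Set.Ioo (0:ℝ) T,
      HasDerivAt (fun s => sigma0 * ∫ x, ζ x s * muDens d ε φt x s)
        ((∫ x, (-(ε * ζ x t * (deriv (φt x) t) ^ 2)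
            + lam t * ζ x t * Real.sqrt (2 * W (φt x t)) * deriv (φt x) t
            - ε * ⟪gradient (fun y => ζ y t) x, gradient (fun y => φt y t) x⟫
                * deriv (φt x) t))
          + sigma0 * ∫ x, deriv (ζ x) t * muDens d ε φt x t) t := by
  intro t ht
  set Φ : Euc d × ℝ → ℝ := Function.uncurry φt with hΦ
  set Z : Euc d × ℝ → ℝ := Function.uncurry ζ with hZdef
  have hφv : ∀ x s, φt x s = Φ (x, s) := fun _ _ => rfl
  have hζv : ∀ x s, ζ x s = Z (x, s) := fun _ _ => rfl
  have hΦd : Differentiable ℝ Φ := hφt.differentiable (by simp)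
  have hZd : Differentiable ℝ Z := hζ.differentiable (by simp)
  have hΦ1 : ContDiff ℝ 1 Φ := hφt.of_le (by exact_mod_cast le_top)
  have hPc := fun i => pX_contDiff hφt i
  have hP1 : ∀ i, ContDiff ℝ 1 (pX i Φ) := fun i => (hPc i).of_le (by exact_mod_cast le_top)
  have hD1 : ContDiff ℝ 1 (pT Φ) := (pT_contDiff hφt).of_le (by exact_mod_cast le_top)
  have hW1 : ContDiff ℝ 1 W := W_contDiff.of_le (by exact_mod_cast le_top)
  have dφ : ∀ x s, deriv (φt x) s = pT Φ (x, s) := fun x s => (slice_t hΦd x s).deriv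
  have dζ : ∀ x s, deriv (ζ x) s = pT Z (x, s) := fun x s => (slice_t hZd x s).deriv
  have gφ : ∀ x s i, (gradient (fun y => φt y s) x) i = pX i Φ (x, s) := fun x s i => by
    rw [grad_coord]; exact slice_x_apply hΦd x s i
  have gζ : ∀ x s i, (gradient (fun y => ζ y s) x) i = pX i Z (x, s) := fun x s i => by
    rw [grad_coord]; exact slice_x_apply hZd x s i
  have lapφ : ∀ x s, lap (fun y => φt y s) x = ∑ i, pX i (pX i Φ) (x, s) := by
    intro x s
    unfold lap
    refine Finset.sum_congr rfl fun i _ => ?_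
    have : (fun y => fderiv ℝ (fun y => φt y s) y (EuclideanSpace.single i 1))
        = fun y => pX i Φ (y, s) := by
      funext y; exact slice_x_apply hΦd y s i
    rw [this]
    exact slice_x_apply ((hP1 i).differentiable (by simp)) x s i
  set e : Euc d × ℝ → ℝ := fun p => ε / 2 * (∑ i, pX i Φ p ^ 2) + W (Φ p) / ε with he
  have hmu : ∀ x s, sigma0 * muDens d ε φt x s = e (x, s) := by
    intro x s
    have hn : ‖gradient (fun y => φt y s) x‖ ^ 2 = ∑ i, pX i Φ (x, s) ^ 2 := by
      rw [EuclideanSpace.norm_sq_eq]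
      simp only [gφ, Real.norm_eq_abs, sq_abs]
    unfold muDens
    rw [hn, hφv, he, ← mul_assoc, mul_one_div_cancel sigma0_ne]
    ring
  have he1 : ContDiff ℝ 1 e := by
    refine ContDiff.add (contDiff_const.mul (ContDiff.sum fun i _ => (hP1 i).pow 2))
      ((hW1.comp hΦ1).div_const ε)
  have hL : (fun s => sigma0 * ∫ x, ζ x s * muDens d ε φt x s)
      = fun s => ∫ x, (fun p => Z p * e p) (x, s) := by
    funext s
    rw [← integral_const_mul]
    refine integral_congr_ae (Filter.Eventually.of_forall fun x => ?_)
    simp only [← hmu, hζv]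
    ring
  have hB : sigma0 * ∫ x, deriv (ζ x) t * muDens d ε φt x t
      = ∫ x, pT Z (x, t) * e (x, t) := by
    rw [← integral_const_mul]
    refine integral_congr_ae (Filter.Eventually.of_forall fun x => ?_)
    simp only [← hmu, dζ]
    ring
  rw [hL, hB]
  refine (deriv_integral (hζ.mul he1) hζc.mul_right t).congr_deriv ?_
  -- derivative of the energy density
  have hpe : ∀ x, pT (fun p => Z p * e p) (x, t) = pT Z (x, t) * e (x, t)
      + (Z (x, t) * (Wp (Φ (x, t)) / ε * pT Φ (x, t))
        + ∑ i, ε * (Z (x, t) * pX i Φ (x, t) * pX i (pT Φ) (x, t))) := by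
    intro x
    have h1 := slice_t ((hζ.mul he1).differentiable (by simp)) x t
    have h2 : HasDerivAt (fun s => e (x, s))
        (ε / 2 * (∑ i, 2 * pX i Φ (x, t) * pX i (pT Φ) (x, t))
          + Wp (Φ (x, t)) * pT Φ (x, t) / ε) t := by
      refine HasDerivAt.add (HasDerivAt.const_mul _ (HasDerivAt.fun_sum fun i _ => ?_)) ?_
      · have := (slice_t ((hP1 i).differentiable (by simp)) x t).fun_pow 2
        rw [mixed hφt] at this
        refine this.congr_deriv ?_
        simp
      · exact ((W_hasDerivAt _).comp t (slice_t hΦd x t)).div_const ε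
    have h3 := (slice_t hZd x t).mul h2
    rw [h1.unique h3, ← Finset.mul_sum]
    have : ∑ i, 2 * pX i Φ (x, t) * pX i (pT Φ) (x, t)
        = 2 * ∑ i, pX i Φ (x, t) * pX i (pT Φ) (x, t) := by
      rw [Finset.mul_sum]; exact Finset.sum_congr rfl fun i _ => by ring
    rw [this]
    have : ∑ i, Z (x, t) * pX i Φ (x, t) * pX i (pT Φ) (x, t)
        = Z (x, t) * ∑ i, pX i Φ (x, t) * pX i (pT Φ) (x, t) := by
      rw [Finset.mul_sum]; exact Finset.sum_congr rfl fun i _ => by ring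
    rw [this]
    ring
  have hA : ∀ x, (-(ε * ζ x t * (deriv (φt x) t) ^ 2)
            + lam t * ζ x t * Real.sqrt (2 * W (φt x t)) * deriv (φt x) t
            - ε * ⟪gradient (fun y => ζ y t) x, gradient (fun y => φt y t) x⟫
                * deriv (φt x) t)
      = Z (x, t) * (Wp (Φ (x, t)) / ε * pT Φ (x, t))
        + ∑ i, (-ε) * ((pX i Z (x, t) * pX i Φ (x, t) + Z (x, t) * pX i (pX i Φ) (x, t))
            * pT Φ (x, t)) := by
    intro x
    have hp := hPDE x t ht
    have hi : ⟪gradient (fun y => ζ y t) x, gradient (fun y => φt y t) x⟫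
        = ∑ i, pX i Z (x, t) * pX i Φ (x, t) := by
      rw [PiLp.inner_apply]
      refine Finset.sum_congr rfl fun i _ => ?_
      rw [gφ, gζ]
      simp [mul_comm]
    rw [hi]
    rw [lapφ, dφ, hφv] at hp
    rw [dφ, hζv, hφv, ← Finset.mul_sum, ← Finset.sum_mul, Finset.sum_add_distrib,
      ← Finset.mul_sum]
    linear_combination (-(Z (x, t) * pT Φ (x, t))) * hp
  simp only [hpe, hA]
  have c1 := hζ.continuous
  have c2 := he1.continuous
  have c3 := hΦ1.continuous
  have c4 := pT_cont hζ
  have c5 := hD1.continuous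
  have c6 := fun i => (hP1 i).continuous
  have c7 := fun i => pX_cont hD1 i
  have c8 := fun i => pX_cont (hP1 i) i
  have c9 := fun i => pX_cont hζ i
  have c10 := Wp_cont
  have s1 : HasCompactSupport (pT Z) := hζc.fderiv_apply (𝕜 := ℝ) _
  have s2 : ∀ i, HasCompactSupport (pX i Z) := fun i => hζc.fderiv_apply (𝕜 := ℝ) _
  have i1 : Integrable (fun x => pT Z (x, t) * e (x, t)) :=
    slice_int (F := fun p => pT Z p * e p) (c4.mul c2) s1.mul_right t
  have i2 : Integrable (fun x => Z (x, t) * (Wp (Φ (x, t)) / ε * pT Φ (x, t))) :=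
    slice_int (F := fun p => Z p * (Wp (Φ p) / ε * pT Φ p))
      (c1.mul (((c10.comp c3).div_const ε).mul c5)) hζc.mul_right t
  have i3 : ∀ i, Integrable (fun x => ε * (Z (x, t) * pX i Φ (x, t) * pX i (pT Φ) (x, t))) :=
    fun i => (slice_int (F := fun p => Z p * pX i Φ p * pX i (pT Φ) p)
      ((c1.mul (c6 i)).mul (c7 i)) hζc.mul_right.mul_right t).const_mul ε
  have i4 : ∀ i, Integrable (fun x => (-ε) * ((pX i Z (x, t) * pX i Φ (x, t)
      + Z (x, t) * pX i (pX i Φ) (x, t)) * pT Φ (x, t))) :=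
    fun i => (slice_int (F := fun p => (pX i Z p * pX i Φ p + Z p * pX i (pX i Φ) p) * pT Φ p)
      ((((c9 i).mul (c6 i)).add (c1.mul (c8 i))).mul c5)
      ((HasCompactSupport.add (s2 i).mul_right hζc.mul_right).mul_right) t).const_mul (-ε)
  rw [integral_add i1 (i2.fun_add (integrable_finsetSum _ fun i _ => i3 i)),
    integral_add i2 (integrable_finsetSum _ fun i _ => i3 i),
    integral_add i2 (integrable_finsetSum _ fun i _ => i4 i),
    integral_finsetSum _ fun i _ => i3 i, integral_finsetSum _ fun i _ => i4 i, add_comm]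
  congr 2
  refine Finset.sum_congr rfl fun i _ => ?_
  rw [integral_const_mul, integral_const_mul, by_parts hζ hζc (hP1 i) hD1 t i]
  ring
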